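/- Let F(x) = |x| φ(x) where φ ∈ C_c^∞(ℝ^d). Then the Fourier transform of F is integrable: F̂ ∈ L^1(ℝ^d); consequently F belongs to the Wiener algebra W_0(ℝ^d) = {ρ̂ : ρ ∈ L^1(ℝ^d)}. -/

import Mathlib

open MeasureTheory
open scoped FourierTransform

lemma integrable_tsum_aux {α : Type*} [MeasurableSpace α] {μ : Measure α} (f : ℕ → α → ℂ)
    (hf : ∀ i, Integrable (f i) μ) (hs : Summable fun i => ∫ a, ‖f i a‖ ∂μ)
    (hm : AEStronglyMeasurable (fun a => ∑' i, f i a) μ) :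
    Integrable (fun a => ∑' i, f i a) μ := by
  refine ⟨hm, ?_⟩
  have h1 : ∫⁻ a, ‖∑' i, f i a‖ₑ ∂μ ≤ ∑' i, ENNReal.ofReal (∫ a, ‖f i a‖ ∂μ) := by
    calc _ ≤ ∫⁻ a, ∑' i, ‖f i a‖ₑ ∂μ := lintegral_mono fun a => enorm_tsum_le_tsum_enorm
      _ = ∑' i, ∫⁻ a, ‖f i a‖ₑ ∂μ := lintegral_tsum fun i => (hf i).1.enorm
      _ = _ := by simp_rw [fun i => ofReal_integral_norm_eq_lintegral_enorm (hf i)]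
  refine lt_of_le_of_lt h1 ?_
  rw [← ENNReal.ofReal_tsum_of_nonneg (fun i => integral_nonneg fun a => norm_nonneg _) hs]
  exact ENNReal.ofReal_lt_top

/-- The Fourier transform of a dilate. -/
lemma fourier_dil (d : ℕ) (g : EuclideanSpace ℝ (Fin d) → ℂ) (a : ℝ) (ha : 0 < a)
    (x : EuclideanSpace ℝ (Fin d)) :
    𝓕 (fun ξ => ((a ^ d)⁻¹ : ℝ) • g (a⁻¹ • ξ)) x = 𝓕 g (a • x) := by
  rw [Real.fourier_eq, Real.fourier_eq]
  have := Measure.integral_comp_inv_smul_of_nonneg (volume : Measure (EuclideanSpace ℝ (Fin d)))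
    (fun η => Real.fourierChar (-(inner ℝ η (a • x))) • g η) ha.le
  rw [finrank_euclideanSpace_fin] at this
  have h2 : (∫ v, Real.fourierChar (-(inner ℝ v (a • x))) • g v) =
    ((a ^ d)⁻¹ : ℝ) • ∫ v, Real.fourierChar (-(inner ℝ (a⁻¹ • v) (a • x))) • g (a⁻¹ • v) := by
    rw [this, smul_smul, inv_mul_cancel₀ (by positivity), one_smul]
  rw [h2, ← integral_smul]
  congr 1
  ext v
  have h3 : inner ℝ (a⁻¹ • v) (a • x) = inner ℝ v x := by
    rw [real_inner_smul_left, real_inner_smul_right, inv_mul_cancel_left₀ ha.ne']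
  rw [h3, smul_comm]

/-- Smooth cutoff of the norm lies in the Wiener algebra. -/
lemma cutoff_norm (d : ℕ) (χ : ContDiffBump (0 : EuclideanSpace ℝ (Fin d))) :
    ∃ ρ : EuclideanSpace ℝ (Fin d) → ℂ, Integrable ρ volume ∧
      ∀ x, 𝓕 ρ x = ((‖x‖ * χ x : ℝ) : ℂ) := by
  set E := EuclideanSpace ℝ (Fin d)
  let h : E → ℂ := fun y => ((‖y‖ * (χ y - χ ((2 : ℝ) • y)) : ℝ) : ℂ)
  have hh1 : HasCompactSupport h := by
    have h1 : HasCompactSupport (χ : E → ℝ) := χ.hasCompactSupport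
    have h2 : HasCompactSupport (fun y : E => χ ((2 : ℝ) • y)) :=
      h1.comp_homeomorph (Homeomorph.smulOfNeZero (2 : ℝ) two_ne_zero)
    have h3 : HasCompactSupport (fun y : E => ‖y‖ * (χ y - χ ((2 : ℝ) • y))) :=
      (h1.sub h2).mul_left
    exact h3.comp_left (g := fun r : ℝ => (r : ℂ)) (by simp)
  have hh2 : ContDiff ℝ (⊤ : ℕ∞) h := by
    refine Complex.ofRealCLM.contDiff.comp ?_
    rw [contDiff_iff_contDiffAt]
    intro y
    by_cases hy : y = 0
    · have hev : (fun y : E => ‖y‖ * (χ y - χ ((2 : ℝ) • y))) =ᶠ[nhds y] fun _ => (0 : ℝ) := by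
        have h1 := χ.eventuallyEq_one
        have h2 : ∀ᶠ z in nhds (0 : E), χ ((2 : ℝ) • z) = 1 := by
          have ht : Filter.Tendsto (fun z : E => (2 : ℝ) • z) (nhds 0) (nhds 0) := by
            have : Continuous (fun z : E => (2 : ℝ) • z) := by fun_prop
            simpa using this.tendsto 0
          exact ht.eventually h1
        rw [hy]
        filter_upwards [h1, h2] with z hz1 hz2
        have e1 : χ z = 1 := hz1
        have e2 : χ ((2 : ℝ) • z) = 1 := hz2
        rw [e1, e2, sub_self, mul_zero]
      exact contDiffAt_const.congr_of_eventuallyEq hev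
    · refine (contDiffAt_norm ℝ hy).mul ?_
      have h1 : ContDiff ℝ (⊤ : ℕ∞) (χ : E → ℝ) := χ.contDiff
      exact (h1.sub (h1.comp (contDiff_const_smul (2 : ℝ)))).contDiffAt
  let hS : SchwartzMap E ℂ := hh1.toSchwartzMap hh2
  let g : SchwartzMap E ℂ := 𝓕⁻ hS
  have hg : ∀ x, 𝓕 (g : E → ℂ) x = h x := by
    intro x
    rw [← SchwartzMap.fourier_coe]
    change (𝓕 (𝓕⁻ hS)) x = h x
    rw [FourierTransform.fourier_fourierInv_eq]
    rfl
  obtain ⟨C, hC⟩ : ∃ C, ∀ x, ‖g x‖ ≤ C := ⟨_, fun x => SchwartzMap.norm_le_seminorm ℝ g x⟩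
  let a : ℕ → ℝ := fun k => 2 ^ k
  have ha : ∀ k, 0 < a k := fun k => by positivity
  have ha1 : ∀ k, 1 ≤ a k := fun k => one_le_pow₀ (by norm_num)
  let ρ : ℕ → E → ℂ := fun k ξ => ((1 / 2 : ℝ) ^ k) • (((a k ^ d)⁻¹ : ℝ) • g ((a k)⁻¹ • ξ))
  have hρc : ∀ k, Continuous (ρ k) := fun k => by
    have := g.continuous
    fun_prop
  have hρb : ∀ k ξ, ‖ρ k ξ‖ ≤ (1 / 2 : ℝ) ^ k * C := by
    intro k ξ
    simp only [ρ, norm_smul]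
    rw [Real.norm_of_nonneg (by positivity), Real.norm_of_nonneg (by have := ha k; positivity)]
    have h1 : (a k ^ d)⁻¹ ≤ 1 := inv_le_one_of_one_le₀ (one_le_pow₀ (ha1 k))
    have h0 : 0 ≤ (a k ^ d)⁻¹ := by have := ha k; positivity
    gcongr
    calc _ ≤ 1 * ‖g ((a k)⁻¹ • ξ)‖ := by gcongr
      _ ≤ C := by rw [one_mul]; exact hC _
  have hgeo : Summable fun k : ℕ => (1 / 2 : ℝ) ^ k := summable_geometric_two
  have hρi : ∀ k, Integrable (ρ k) volume := fun k =>
    ((g.integrable.comp_smul (inv_ne_zero (ha k).ne')).smul ((a k ^ d)⁻¹)).smul ((1 / 2 : ℝ) ^ k)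
  have hρn : ∀ k, ∫ ξ, ‖ρ k ξ‖ = (1 / 2 : ℝ) ^ k * ∫ ξ, ‖g ξ‖ := by
    intro k
    have h0 : 0 ≤ (a k ^ d)⁻¹ := by have := ha k; positivity
    simp only [ρ, norm_smul]
    rw [Real.norm_of_nonneg (by positivity), Real.norm_of_nonneg h0, integral_const_mul,
      integral_const_mul, Measure.integral_comp_inv_smul_of_nonneg volume (fun ξ => ‖g ξ‖) (ha k).le,
      finrank_euclideanSpace_fin, smul_eq_mul, inv_mul_cancel_left₀ (pow_pos (ha k) d).ne']
  have hsum : Summable fun k => ∫ ξ, ‖ρ k ξ‖ := by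
    simp_rw [hρn]; exact hgeo.mul_right _
  have hcont : Continuous fun ξ => ∑' k, ρ k ξ :=
    continuous_tsum hρc (hgeo.mul_right C) hρb
  have hint : Integrable (fun ξ => ∑' k, ρ k ξ) volume :=
    integrable_tsum_aux ρ hρi hsum hcont.aestronglyMeasurable
  refine ⟨_, hint, fun x => ?_⟩
  have hk : ∀ k, 𝓕 (ρ k) x = ((‖x‖ * χ (a k • x) : ℝ) : ℂ) - ((‖x‖ * χ (a (k + 1) • x) : ℝ) : ℂ) := by
    intro k
    have h1 : 𝓕 (ρ k) x = ((1 / 2 : ℝ) ^ k) • 𝓕 (fun ξ => ((a k ^ d)⁻¹ : ℝ) • g ((a k)⁻¹ • ξ)) x := by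
      rw [Real.fourier_eq, Real.fourier_eq, ← integral_smul]
      congr 1
      ext v
      simp only [ρ]
      rw [smul_comm]
    rw [h1, fourier_dil d g (a k) (ha k), hg]
    simp only [h]
    rw [smul_smul, norm_smul, Real.norm_of_nonneg (ha k).le]
    have h2 : (2 : ℝ) * a k = a (k + 1) := by simp only [a]; ring
    have h3 : (1 / 2 : ℝ) ^ k * a k = 1 := by simp only [a]; rw [← mul_pow]; norm_num
    rw [h2, ← Complex.ofReal_sub, Complex.real_smul, ← Complex.ofReal_mul]
    congr 1
    linear_combination (‖x‖ * (χ (a k • x) - χ (a (k + 1) • x))) * h3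
  have hS1 : HasSum (fun k => 𝓕 (ρ k) x) (𝓕 (fun ξ => ∑' k, ρ k ξ) x) := by
    have := hasSum_integral_of_summable_integral_norm (μ := (volume : Measure E))
      (F := fun k ξ => Real.fourierChar (-(inner ℝ ξ x)) • ρ k ξ)
      (fun k => (Real.fourierIntegral_convergent_iff x).2 (hρi k)) (by simpa using hsum)
    simp_rw [Real.fourier_eq]
    have he : (∫ ξ : E, Real.fourierChar (-(inner ℝ ξ x)) • ∑' k, ρ k ξ) =
        ∫ ξ : E, ∑' k, Real.fourierChar (-(inner ℝ ξ x)) • ρ k ξ := by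
      congr 1
      ext ξ
      simp_rw [Circle.smul_def, smul_eq_mul]
      rw [tsum_mul_left]
    rw [he]
    exact this
  have hS2 := hS1.tendsto_sum_nat
  simp_rw [hk, Finset.sum_range_sub'] at hS2
  refine tendsto_nhds_unique hS2 ?_
  have h0 : a 0 = 1 := by simp [a]
  rw [h0, one_smul]
  have hlim : Filter.Tendsto (fun n => ((‖x‖ * χ (a n • x) : ℝ) : ℂ)) Filter.atTop (nhds 0) := by
    by_cases hx : x = 0
    · simp [hx]
    · refine tendsto_const_nhds.congr' ?_
      have : Filter.Tendsto (fun n => a n * ‖x‖) Filter.atTop Filter.atTop :=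
        (tendsto_pow_atTop_atTop_of_one_lt (by norm_num)).atTop_mul_const (norm_pos_iff.2 hx)
      filter_upwards [this.eventually_ge_atTop χ.rOut] with n hn
      rw [χ.zero_of_le_dist (by simpa [norm_smul, abs_of_pos (ha n)] using hn)]
      simp
  simpa using tendsto_const_nhds.sub hlim

/-- For `φ ∈ C_c^∞(ℝ^d)`, the function `F(x) = |x| φ(x)` has
integrable Fourier transform, and consequently `F` belongs to the Wiener
algebra `W_0(ℝ^d) = {ρ̂ : ρ ∈ L¹(ℝ^d)}`. -/
theorem statement6 (d : ℕ) (φ : EuclideanSpace ℝ (Fin d) → ℂ)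
    (hφ_smooth : ContDiff ℝ (⊤ : ℕ∞) φ) (hφ_supp : HasCompactSupport φ)
    (F : EuclideanSpace ℝ (Fin d) → ℂ) (hF : ∀ x, F x = (‖x‖ : ℂ) * φ x) :
    Integrable (𝓕 F) volume ∧
      ∃ ρ : EuclideanSpace ℝ (Fin d) → ℂ, Integrable ρ volume ∧ ∀ x, 𝓕 ρ x = F x := by
  obtain ⟨R, hR0, hR⟩ : ∃ R : ℝ, 0 < R ∧ tsupport φ ⊆ Metric.closedBall 0 R := by
    obtain ⟨R, hR⟩ := hφ_supp.isCompact.isBounded.subset_closedBall 0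
    exact ⟨max R 1, by positivity, hR.trans (Metric.closedBall_subset_closedBall (le_max_left _ _))⟩
  let χ : ContDiffBump (0 : EuclideanSpace ℝ (Fin d)) := ⟨R, R + 1, hR0, by linarith⟩
  obtain ⟨ρ₁, hρ₁, hρ₁F⟩ := cutoff_norm d χ
  let φS : SchwartzMap (EuclideanSpace ℝ (Fin d)) ℂ := hφ_supp.toSchwartzMap hφ_smooth
  let g : SchwartzMap (EuclideanSpace ℝ (Fin d)) ℂ := 𝓕⁻ φS
  have hg : ∀ x, 𝓕 (g : EuclideanSpace ℝ (Fin d) → ℂ) x = φ x := by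
    intro x
    rw [← SchwartzMap.fourier_coe]
    change (𝓕 (𝓕⁻ φS)) x = φ x
    rw [FourierTransform.fourier_fourierInv_eq]
    rfl
  let ρ := convolution ρ₁ g (ContinuousLinearMap.mul ℂ ℂ) volume
  have hρi : Integrable ρ volume := hρ₁.integrable_convolution _ g.integrable
  have hρc : Continuous ρ := by
    refine BddAbove.continuous_convolution_right_of_integrable _ ?_ hρ₁ g.continuous
    exact ⟨SchwartzMap.seminorm ℝ 0 0 g, fun x ⟨y, hy⟩ ↦ hy ▸ SchwartzMap.norm_le_seminorm ℝ g y⟩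
  have hρF : ∀ x, 𝓕 ρ x = F x := by
    intro x
    rw [Real.fourier_mul_convolution_eq hρ₁ g.integrable, hρ₁F, hg, hF]
    by_cases hx : x ∈ tsupport φ
    · rw [χ.one_of_mem_closedBall (hR hx), mul_one]
    · simp [image_eq_zero_of_notMem_tsupport hx]
  refine ⟨?_, ρ, hρi, hρF⟩
  have hFe : F = fun x => (‖x‖ : ℂ) * φ x := funext hF
  have hFi : Integrable F volume := by
    rw [hFe]
    have := hφ_smooth.continuous
    exact Continuous.integrable_of_hasCompactSupport (by fun_prop) hφ_supp.mul_left
  have hρF' : 𝓕 ρ = F := funext hρF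
  have hinv := hρc.fourierInv_fourier_eq hρi (by rw [hρF']; exact hFi)
  rw [hρF'] at hinv
  have : 𝓕 F = fun x => ρ (-x) := by
    ext x
    rw [← hinv, Real.fourierInv_eq_fourier_neg, neg_neg]
  rw [this]
  exact hρi.comp_neg
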